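/- (Minimum length of informative experiments.) Let the data (u_{[0,t−1]}, y_{[0,t−1]}) with u_{[0,t−1]} ≠ 0 be generated by a minimal true system with n_true states and lag ℓ_true, and let L, N satisfy ℓ_true ≤ L and n_true ≤ N. If the data are informative for system identification, then ℓ_min,t = ℓ_true, n_min,t = n_true, and t ≥ T := L^a + (L^a+1)m + n_true, where L^a := min(L, N − n_true + ℓ_true). In particular, every informative experiment contains at least T samples. -/

import Mathlib

open Matrix

/-- The Hankel matrix with `rows` block rows and `cols` columns built from the
vector sequence `f` (starting at time `0`): the block entry in block row `r` and
column `c` is `f (r + c)`.  Thus `H_k(f_{[0,t-1]}) = hankel f (k+1) (t-k)`. -/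
def hankel {d : ℕ} (f : ℕ → Fin d → ℝ) (rows cols : ℕ) :
    Matrix (Fin rows × Fin d) (Fin cols) ℝ :=
  Matrix.of fun r c => f ((r.1 : ℕ) + (c : ℕ)) r.2

/-- `u_{[0,t-1]}` is persistently exciting of order `k+1`, i.e. the Hankel
matrix `H_k(u_{[0,t-1]})` (with `k+1` block rows) has full row rank. -/
def PersistentlyExciting {m : ℕ} (u : ℕ → Fin m → ℝ) (t k : ℕ) : Prop :=
  (hankel u (k + 1) (t - k)).rank = (k + 1) * m

/-- The Hankel matrix `H_{k,t}`: `H_k(y_{[0,t-1]})` stacked on top of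
`H_k(u_{[0,t-1]})`. -/
def Hkt {m p : ℕ} (u : ℕ → Fin m → ℝ) (y : ℕ → Fin p → ℝ) (k t : ℕ) :
    Matrix ((Fin (k + 1) × Fin p) ⊕ (Fin (k + 1) × Fin m)) (Fin (t - k)) ℝ :=
  Matrix.fromRows (hankel y (k + 1) (t - k)) (hankel u (k + 1) (t - k))

/-- The matrix `G_{k,t}`: `H_{k-1}(y_{[0,t-2]})` (which has `k` block rows and
`t-k` columns) stacked on top of `H_k(u_{[0,t-1]})`. -/
def Gkt {m p : ℕ} (u : ℕ → Fin m → ℝ) (y : ℕ → Fin p → ℝ) (k t : ℕ) :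
    Matrix ((Fin k × Fin p) ⊕ (Fin (k + 1) × Fin m)) (Fin (t - k)) ℝ :=
  Matrix.fromRows (hankel y k (t - k)) (hankel u (k + 1) (t - k))

/-- `δ_{k,t} = rank H_{k,t} - rank G_{k,t}`. -/
noncomputable def deltaKT {m p : ℕ} (u : ℕ → Fin m → ℝ) (y : ℕ → Fin p → ℝ) (k t : ℕ) : ℕ :=
  (Hkt u y k t).rank - (Gkt u y k t).rank

/-- `q_t`: the smallest `k ∈ [0, t-1]` with `δ_{k,t} = 0`. -/
noncomputable def qT {m p : ℕ} (u : ℕ → Fin m → ℝ) (y : ℕ → Fin p → ℝ) (t : ℕ) : ℕ :=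
  sInf {k | k ≤ t - 1 ∧ deltaKT u y k t = 0}

/-- A discrete-time linear system `(A, B, C, D)` with `m` inputs, `p` outputs
and `n` states. -/
structure LinSys (m p : ℕ) where
  n : ℕ
  A : Matrix (Fin n) (Fin n) ℝ
  B : Matrix (Fin n) (Fin m) ℝ
  C : Matrix (Fin p) (Fin n) ℝ
  D : Matrix (Fin p) (Fin m) ℝ

/-- `obsMat sys k` is the observability matrix `Ω_{k-1}` with `k` block rows,
stacking `C, CA, ..., CA^(k-1)`. -/
def obsMat {m p : ℕ} (sys : LinSys m p) (k : ℕ) :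
    Matrix (Fin k × Fin p) (Fin sys.n) ℝ :=
  Matrix.of fun r j => (sys.C * sys.A ^ (r.1 : ℕ)) r.2 j

/-- The lag `ℓ(C,A)`: the smallest `k ≥ 0` with `rank Ω_k = rank Ω_{k-1}`. -/
noncomputable def lag {m p : ℕ} (sys : LinSys m p) : ℕ :=
  sInf {k | (obsMat sys (k + 1)).rank = (obsMat sys k).rank}

/-- The controllability matrix with `k` blocks `[B, AB, ..., A^(k-1)B]`. -/
def ctrlMat {m p : ℕ} (sys : LinSys m p) (k : ℕ) :
    Matrix (Fin sys.n) (Fin k × Fin m) ℝ :=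
  Matrix.of fun i c => (sys.A ^ (c.1 : ℕ) * sys.B) i c.2

def Observable {m p : ℕ} (sys : LinSys m p) : Prop :=
  (obsMat sys sys.n).rank = sys.n

def Controllable {m p : ℕ} (sys : LinSys m p) : Prop :=
  (ctrlMat sys sys.n).rank = sys.n

def MinimalSys {m p : ℕ} (sys : LinSys m p) : Prop :=
  Controllable sys ∧ Observable sys

/-- The system explains the data `(u_{[0,t-1]}, y_{[0,t-1]})` with the
compatible state sequence `x`. -/
def ExplainsWith {m p : ℕ} (sys : LinSys m p) (t : ℕ) (u : ℕ → Fin m → ℝ)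
    (y : ℕ → Fin p → ℝ) (x : ℕ → Fin sys.n → ℝ) : Prop :=
  ∀ s < t, x (s + 1) = sys.A.mulVec (x s) + sys.B.mulVec (u s) ∧
    y s = sys.C.mulVec (x s) + sys.D.mulVec (u s)

/-- The system explains (equivalently, generates) the data
`(u_{[0,t-1]}, y_{[0,t-1]})`. -/
def Explains {m p : ℕ} (sys : LinSys m p) (t : ℕ) (u : ℕ → Fin m → ℝ)
    (y : ℕ → Fin p → ℝ) : Prop :=
  ∃ x : ℕ → Fin sys.n → ℝ, ExplainsWith sys t u y x

/-- `ℰ_t`, the set of systems explaining the data. -/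
def ExplSet {m p : ℕ} (t : ℕ) (u : ℕ → Fin m → ℝ) (y : ℕ → Fin p → ℝ) :
    Set (LinSys m p) :=
  {sys | Explains sys t u y}

/-- `ℓ_min,t`: the smallest lag among explaining systems. -/
noncomputable def lMin {m p : ℕ} (t : ℕ) (u : ℕ → Fin m → ℝ) (y : ℕ → Fin p → ℝ) : ℕ :=
  sInf {ℓ | ∃ sys : LinSys m p, Explains sys t u y ∧ lag sys = ℓ}

/-- `n_min,t`: the smallest state dimension among explaining systems. -/
noncomputable def nMin {m p : ℕ} (t : ℕ) (u : ℕ → Fin m → ℝ) (y : ℕ → Fin p → ℝ) : ℕ :=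
  sInf {n | ∃ sys : LinSys m p, Explains sys t u y ∧ sys.n = n}

/-- Two systems are isomorphic: `D₁ = D₂` and there is an invertible state
transformation `S` with `S A₁ = A₂ S`, `S B₁ = B₂`, `C₁ = C₂ S`. -/
def Isomorphic {m p : ℕ} (s1 s2 : LinSys m p) : Prop :=
  s1.D = s2.D ∧ ∃ (S : Matrix (Fin s2.n) (Fin s1.n) ℝ)
    (S' : Matrix (Fin s1.n) (Fin s2.n) ℝ),
    S * S' = 1 ∧ S' * S = 1 ∧ S * s1.A = s2.A * S ∧ S * s1.B = s2.B ∧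
    s1.C = s2.C * S

/-- `M`, the set of minimal systems. -/
def Mset (m p : ℕ) : Set (LinSys m p) := {sys | MinimalSys sys}

/-- `S_{L,N}`, the set of systems with lag at most `L` and at most `N` states. -/
def SLN (m p L N : ℕ) : Set (LinSys m p) := {sys | lag sys ≤ L ∧ sys.n ≤ N}

/-- The data `(u_{[0,t-1]}, y_{[0,t-1]})` are informative for system
identification (with prior bounds `L`, `N`, and true state dimension `nTrue`). -/
def Informative {m p : ℕ} (t : ℕ) (u : ℕ → Fin m → ℝ) (y : ℕ → Fin p → ℝ)
    (nTrue L N : ℕ) : Prop :=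
  (ExplSet t u y ∩ Mset m p ∩ SLN m p L N =
      {sys ∈ ExplSet t u y | sys.n = nTrue} ∩ Mset m p ∩ SLN m p L N) ∧
  ∀ s1 ∈ ExplSet t u y ∩ Mset m p ∩ SLN m p L N,
    ∀ s2 ∈ ExplSet t u y ∩ Mset m p ∩ SLN m p L N, Isomorphic s1 s2

/-!
Let `ℓ` be the true lag and `K = ℓ + d = L^a`. The heart of the matter is that for informative data
the windows made of the state at time `s` and the inputs at times `s, …, s + K` span. If they do
not, the true trajectory satisfies a relation `ξ x(s) + ∑ j, η j u(s + j) = 0`. The true system has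
a direction along which an additional scalar input reaches the output with a delay of exactly `ℓ`
steps; putting `d` first-order filters in front of it increases the delay to `K` and the number of
states by `d`. Feeding `ε` times the relation back into this input does not affect the data, and
because of the delay the anticipated inputs `u(s + j)`, `j ≤ K`, can be moved into the matrices `B`
and `D`. The closed loop stays observable, and it is controllable for all but finitely many `ε`:
a left eigenvector obstructing controllability comes from one of finitely many eigenvectors that
do not depend on `ε`. So the data are explained by another minimal system: for `d > 0` it has too
many states, and for `d = 0` an isomorphism with the true system would have to be the identity.

Counting the windows gives the bound on `t`. Moreover a combination of windows with zero inputs is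
an autonomous response of every explaining system, so that each of them observes for at least `ℓ`
steps and needs at least as many states as the true one.
-/

/-- A discrete-time linear system `x(s+1) = A x(s) + B u(s)`, `y(s) = C x(s) + D u(s)` with input
module `U`, output module `Y` and state module `X`: the coordinate-free form of `LinSys`. -/
@[ext]
structure StateSpace (R U Y X : Type*) [CommRing R] [AddCommGroup U] [Module R U]
    [AddCommGroup Y] [Module R Y] [AddCommGroup X] [Module R X] where
  A : Module.End R X
  B : U →ₗ[R] X
  C : X →ₗ[R] Y
  D : U →ₗ[R] Y

namespace StateSpace

section Ring

variable {R U Y X X' : Type*} [CommRing R] [AddCommGroup U] [Module R U]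
  [AddCommGroup Y] [Module R Y] [AddCommGroup X] [Module R X] [AddCommGroup X'] [Module R X']
  (S : StateSpace R U Y X)

/-! ### Observability -/

/-- The states whose zero-input output vanishes during the first `k` steps: the kernel of the
observability matrix with `k` block rows. -/
def unobservable (k : ℕ) : Submodule R X :=
  ⨅ i < k, LinearMap.ker (S.C ∘ₗ (S.A ^ i))

variable {S}

lemma mem_unobservable {k : ℕ} {z : X} :
    z ∈ S.unobservable k ↔ ∀ i < k, S.C ((S.A ^ i) z) = 0 := by
  simp only [unobservable, Submodule.mem_iInf, LinearMap.mem_ker, LinearMap.comp_apply]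

lemma unobservable_antitone : Antitone S.unobservable := fun _ _ hkl _ hz =>
  mem_unobservable.2 fun i hi => mem_unobservable.1 hz i (hi.trans_le hkl)

lemma unobservable_succ (k : ℕ) :
    S.unobservable (k + 1) = LinearMap.ker S.C ⊓ (S.unobservable k).comap S.A := by
  ext z
  simp only [mem_unobservable, Submodule.mem_inf, LinearMap.mem_ker, Submodule.mem_comap,
    Nat.lt_succ_iff_lt_or_eq]
  refine ⟨fun h => ⟨?_, fun i hi => ?_⟩, fun h i hi => ?_⟩
  · exact h 0 (by lia)
  · exact h (i + 1) (by lia)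
  · cases i with
    | zero => exact h.1
    | succ i => exact h.2 i (by lia)

lemma unobservable_succ_eq_iff {k : ℕ} :
    S.unobservable (k + 1) = S.unobservable k ↔
      ∀ z ∈ S.unobservable k, S.C ((S.A ^ k) z) = 0 := by
  refine ⟨fun h z hz => mem_unobservable.1 (h ▸ hz) k k.lt_succ_self,
    fun h => (unobservable_antitone k.le_succ).antisymm fun z hz => mem_unobservable.2 ?_⟩
  intro i hi
  obtain hi | rfl := Nat.lt_succ_iff_lt_or_eq.1 hi
  · exact mem_unobservable.1 hz i hi
  · exact h z hz

lemma unobservable_eq_of_stationary {k l : ℕ}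
    (hk : S.unobservable (k + 1) = S.unobservable k) (hkl : k ≤ l) :
    S.unobservable l = S.unobservable k := by
  induction l, hkl using Nat.le_induction with
  | base => rfl
  | succ l _ ih => rw [unobservable_succ, ih, ← unobservable_succ, hk]

variable (S) in
lemma exists_unobservable_stationary [IsArtinian R X] :
    ∃ k, S.unobservable (k + 1) = S.unobservable k := by
  obtain ⟨k, hk⟩ := IsArtinian.monotone_stabilizes
    (⟨S.unobservable, fun _ _ h => unobservable_antitone h⟩ : ℕ →o (Submodule R X)ᵒᵈ)
  exact ⟨k, (hk (k + 1) k.le_succ).symm⟩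

/-! ### Trajectories -/

variable (S) in
/-- The states `x` are compatible with the inputs `u` and the outputs `y` during the first `t`
steps. -/
def IsTrajectory (t : ℕ) (u : ℕ → U) (y : ℕ → Y) (x : ℕ → X) : Prop :=
  ∀ s < t, x (s + 1) = S.A (x s) + S.B (u s) ∧ y s = S.C (x s) + S.D (u s)

lemma IsTrajectory.sum_smul_shift {t K : ℕ} {u : ℕ → U} {y : ℕ → Y} {x : ℕ → X}
    (hx : S.IsTrajectory t u y x) {ι : Type*} [Fintype ι] {σ : ι → ℕ} (hσ : ∀ s, σ s + K < t)
    (c : ι → R) :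
    S.IsTrajectory (K + 1) (fun i => ∑ s, c s • u (σ s + i)) (fun i => ∑ s, c s • y (σ s + i))
      (fun i => ∑ s, c s • x (σ s + i)) := by
  intro i hi
  simp only [map_sum, map_smul, ← Finset.sum_add_distrib, ← smul_add]
  refine ⟨Finset.sum_congr rfl fun s _ => ?_, Finset.sum_congr rfl fun s _ => ?_⟩
  · rw [← add_assoc, (hx (σ s + i) (by have := hσ s; lia)).1]
  · rw [(hx (σ s + i) (by have := hσ s; lia)).2]

lemma IsTrajectory.output_of_zero_input {t : ℕ} {u : ℕ → U} {y : ℕ → Y} {x : ℕ → X}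
    (hx : S.IsTrajectory t u y x) (hu : ∀ i < t, u i = 0) {i : ℕ} (hi : i < t) :
    y i = S.C ((S.A ^ i) (x 0)) := by
  have state : ∀ j ≤ i, x j = (S.A ^ j) (x 0) := by
    intro j
    induction j with
    | zero => intro _; rfl
    | succ j ih =>
      intro hj
      rw [(hx j (by lia)).1, hu j (by lia), map_zero, add_zero, ih (by lia), pow_succ',
        Module.End.mul_apply]
  rw [(hx i hi).2, hu i hi, map_zero, add_zero, state i le_rfl]

/-! ### Isomorphisms -/

/-- The state transformation `φ` carries the system `S` to the system `S'`. -/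
structure IsIso (φ : X ≃ₗ[R] X') (S : StateSpace R U Y X) (S' : StateSpace R U Y X') : Prop where
  map_A : ∀ z, φ (S.A z) = S'.A (φ z)
  map_B : ∀ a, φ (S.B a) = S'.B a
  map_C : ∀ z, S'.C (φ z) = S.C z
  D_eq : S.D = S'.D

namespace IsIso

variable {φ : X ≃ₗ[R] X'} {S' : StateSpace R U Y X'}

lemma map_pow (h : IsIso φ S S') (i : ℕ) (z : X) : φ ((S.A ^ i) z) = (S'.A ^ i) (φ z) := by
  induction i with
  | zero => rfl
  | succ i ih => rw [pow_succ', pow_succ', Module.End.mul_apply, Module.End.mul_apply, h.map_A, ih]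

lemma output_pow (h : IsIso φ S S') (i : ℕ) (z : X) :
    S'.C ((S'.A ^ i) (φ z)) = S.C ((S.A ^ i) z) := by
  rw [← h.map_pow, h.map_C]

lemma unobservable_eq_bot (h : IsIso φ S S') {k : ℕ} (hS : S.unobservable k = ⊥) :
    S'.unobservable k = ⊥ := by
  refine (Submodule.eq_bot_iff _).2 fun z hz => ?_
  obtain ⟨z, rfl⟩ := φ.surjective z
  have hz' : z ∈ S.unobservable k := mem_unobservable.2 fun i hi => by
    rw [← h.output_pow, mem_unobservable.1 hz i hi]
  rw [(Submodule.eq_bot_iff _).1 hS z hz', map_zero]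

lemma isTrajectory (h : IsIso φ S S') {t : ℕ} {u : ℕ → U} {y : ℕ → Y} {x : ℕ → X}
    (hx : S.IsTrajectory t u y x) : S'.IsTrajectory t u y (fun s => φ (x s)) := by
  intro s hs
  dsimp only
  rw [(hx s hs).1, (hx s hs).2, map_add, h.map_A, h.map_B, h.map_C, h.D_eq]
  exact ⟨rfl, rfl⟩

/-- The outputs `C A^i` observe the state, so they determine the transformation. -/
lemma eq_of_output_eq {Z : Type*} [AddCommGroup Z] [Module R Z] {T : StateSpace R U Y Z}
    {S' : StateSpace R U Y X} {φ ψ : X ≃ₗ[R] Z} (h : IsIso φ S T) (h' : IsIso ψ S' T) {k : ℕ}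
    (hS : S.unobservable k = ⊥)
    (hout : ∀ i < k, ∀ z, S'.C ((S'.A ^ i) z) = S.C ((S.A ^ i) z)) : S' = S := by
  have hφψ : ψ = φ := by
    ext z
    have hz : φ z - ψ z ∈ T.unobservable k := mem_unobservable.2 fun i hi => by
      rw [map_sub, map_sub, h.output_pow, h'.output_pow, hout i hi, sub_self]
    rw [h.unobservable_eq_bot hS, Submodule.mem_bot, sub_eq_zero] at hz
    exact hz.symm
  subst hφψ
  refine StateSpace.ext (LinearMap.ext fun z => ψ.injective ?_)
    (LinearMap.ext fun a => ψ.injective ?_) (LinearMap.ext fun z => ?_) (h'.D_eq.trans h.D_eq.symm)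
  · rw [h.map_A, h'.map_A]
  · rw [h.map_B, h'.map_B]
  · rw [← h.map_C, ← h'.map_C]

end IsIso

end Ring

/-! ### Data whose windows span -/

section Windows

variable {𝕜 U Y X X' : Type*} [Field 𝕜] [AddCommGroup U] [Module 𝕜 U] [AddCommGroup Y]
  [Module 𝕜 Y] [AddCommGroup X] [Module 𝕜 X] [AddCommGroup X'] [Module 𝕜 X'] {K t : ℕ}
  {u : ℕ → U} {y : ℕ → Y} {x : ℕ → X} {x' : ℕ → X'} {S : StateSpace 𝕜 U Y X}
  {S' : StateSpace 𝕜 U Y X'}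

/-- The state at time `s` together with the inputs at times `s, …, s + K`. -/
def window (K : ℕ) (u : ℕ → U) (x : ℕ → X) (s : ℕ) : X × (Fin (K + 1) → U) :=
  (x s, fun j => u (s + j))

variable (𝕜) in
/-- The windows of length `K + 1` inside `[0, t - 1]` span: in matrix terms, the states stacked on
the Hankel matrix of the inputs with `K + 1` block rows have full row rank. -/
def WindowsSpan (K t : ℕ) (u : ℕ → U) (x : ℕ → X) : Prop :=
  Submodule.span 𝕜 (window K u x '' (Finset.range (t - K) : Set ℕ)) = ⊤

lemma exists_annihilator_of_not_windowsSpan (h : ¬ WindowsSpan 𝕜 K t u x) :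
    ∃ (ξ : X →ₗ[𝕜] 𝕜) (η : Fin (K + 1) → U →ₗ[𝕜] 𝕜), (ξ ≠ 0 ∨ η ≠ 0) ∧
      ∀ s, s + K < t → ξ (x s) + ∑ j, η j (u (s + j)) = 0 := by
  obtain ⟨f, hf, hker⟩ := Submodule.exists_le_ker_of_lt_top _ (lt_top_iff_ne_top.2 h)
  have hf_eq : ∀ z v, f (z, v) = f.comp (LinearMap.inl 𝕜 X _) z +
      ∑ j, f.comp ((LinearMap.inr 𝕜 X _).comp (LinearMap.single 𝕜 (fun _ => U) j)) (v j) := by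
    intro z v
    have hinr : ∑ j, f.comp (LinearMap.inr 𝕜 X _) (Pi.single j (v j)) = f (0, v) :=
      (map_sum (f.comp (LinearMap.inr 𝕜 X _)) _ _).symm.trans
        (congrArg _ (Finset.univ_sum_single v))
    exact (congrArg f (Prod.fst_add_snd (z, v)).symm).trans
      ((map_add f _ _).trans (congrArg _ hinr.symm))
  refine ⟨f.comp (LinearMap.inl 𝕜 X _),
    fun j => f.comp ((LinearMap.inr 𝕜 X _).comp (LinearMap.single 𝕜 (fun _ => U) j)), ?_, ?_⟩
  · by_contra! h0
    refine hf (LinearMap.ext fun ⟨z, v⟩ => ?_)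
    rw [hf_eq, h0.1]
    exact (zero_add _).trans (Finset.sum_eq_zero fun j _ => LinearMap.congr_fun (congrFun h0.2 j) _)
  · intro s hs
    rw [← hf_eq (x s) fun j => u (s + j)]
    exact hker (Submodule.subset_span ⟨s, Finset.mem_coe.2 (Finset.mem_range.2 (by lia)), rfl⟩)

lemma WindowsSpan.finrank_le [Module.Finite 𝕜 X] [Module.Finite 𝕜 U]
    (h : WindowsSpan 𝕜 K t u x) :
    Module.finrank 𝕜 X + (K + 1) * Module.finrank 𝕜 U ≤ t - K := by
  classical
  calc Module.finrank 𝕜 X + (K + 1) * Module.finrank 𝕜 U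
      = Module.finrank 𝕜 (X × (Fin (K + 1) → U)) := by
        rw [Module.finrank_prod, Module.finrank_pi_fintype, Finset.sum_const, Finset.card_univ,
          Fintype.card_fin, smul_eq_mul]
    _ = Module.finrank 𝕜
          (Submodule.span 𝕜 (((Finset.range (t - K)).image (window K u x) : Finset _) :
            Set (X × (Fin (K + 1) → U)))) := by
        rw [Finset.coe_image, show Submodule.span 𝕜 _ = ⊤ from h, finrank_top]
    _ ≤ ((Finset.range (t - K)).image (window K u x)).card := finrank_span_finset_le_card _
    _ ≤ t - K := Finset.card_image_le.trans_eq (Finset.card_range _)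

/-- A combination of windows with zero inputs and initial state `z` is an autonomous response of
every explaining system, with the same outputs. -/
lemma WindowsSpan.exists_matching_state (h : WindowsSpan 𝕜 K t u x)
    (hx : S.IsTrajectory t u y x) (hx' : S'.IsTrajectory t u y x') (z : X) :
    ∃ z', ∀ i ≤ K, S.C ((S.A ^ i) z) = S'.C ((S'.A ^ i) z') := by
  have hz : ((z, 0) : X × (Fin (K + 1) → U)) ∈
      Submodule.span 𝕜 (window K u x '' (Finset.range (t - K) : Set ℕ)) :=
    (show Submodule.span 𝕜 _ = ⊤ from h) ▸ Submodule.mem_top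
  obtain ⟨c, hc⟩ := (Submodule.mem_span_image_finset_iff_exists_fun 𝕜).1 hz
  have hF : ∀ s : Finset.range (t - K), s + K < t := fun s => by
    have := Finset.mem_range.1 s.2
    lia
  have hstate : ∑ s : Finset.range (t - K), c s • x (s + 0) = z := by
    simpa [window, Prod.fst_sum] using congrArg Prod.fst hc
  have hinput : ∀ i < K + 1, ∑ s : Finset.range (t - K), c s • u (s + i) = 0 := fun i hi => by
    simpa [window, Prod.snd_sum] using congrFun (congrArg Prod.snd hc) ⟨i, hi⟩
  refine ⟨∑ s : Finset.range (t - K), c s • x' (s + 0), fun i hi => ?_⟩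
  rw [← (hx'.sum_smul_shift hF c).output_of_zero_input hinput (Nat.lt_succ_of_le hi),
    (hx.sum_smul_shift hF c).output_of_zero_input hinput (Nat.lt_succ_of_le hi), hstate]

lemma WindowsSpan.finrank_le_finrank [Module.Finite 𝕜 X'] (h : WindowsSpan 𝕜 K t u x)
    (hx : S.IsTrajectory t u y x) (hx' : S'.IsTrajectory t u y x') {k : ℕ} (hk : k ≤ K + 1)
    (hS : S.unobservable k = ⊥) : Module.finrank 𝕜 X ≤ Module.finrank 𝕜 X' := by
  choose z' hz' using h.exists_matching_state hx hx'
  let b := Module.Basis.ofVectorSpace 𝕜 X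
  have hφ : ∀ z, ∀ i ≤ K, S.C ((S.A ^ i) z) = S'.C ((S'.A ^ i) (b.constr 𝕜 (z' ∘ b) z)) := by
    intro z i hi
    refine LinearMap.congr_fun (f := S.C ∘ₗ S.A ^ i)
      (g := (S'.C ∘ₗ S'.A ^ i) ∘ₗ b.constr 𝕜 (z' ∘ b)) (b.ext fun e => ?_) z
    simp only [LinearMap.comp_apply, Module.Basis.constr_basis, Function.comp_apply, hz' _ i hi]
  refine LinearMap.finrank_le_finrank_of_injective (f := b.constr 𝕜 (z' ∘ b))
    (LinearMap.ker_eq_bot.1 ((Submodule.eq_bot_iff _).2 fun z hz => ?_))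
  rw [← Submodule.mem_bot 𝕜, ← hS]
  refine mem_unobservable.2 fun i hi => ?_
  rw [hφ z i (by lia), LinearMap.mem_ker.1 hz, map_zero, map_zero]

lemma WindowsSpan.unobservable_stationary (h : WindowsSpan 𝕜 K t u x)
    (hx : S.IsTrajectory t u y x) (hx' : S'.IsTrajectory t u y x') {k : ℕ} (hk : k ≤ K)
    (hS' : S'.unobservable (k + 1) = S'.unobservable k) :
    S.unobservable (k + 1) = S.unobservable k := by
  refine unobservable_succ_eq_iff.2 fun z hz => ?_
  obtain ⟨z', hz'⟩ := h.exists_matching_state hx hx' z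
  rw [hz' k hk]
  refine unobservable_succ_eq_iff.1 hS' z' (mem_unobservable.2 fun i hi => ?_)
  rw [← hz' i (by lia), mem_unobservable.1 hz i hi]

end Windows

/-! ### Controllability -/

section Controllability

/-- The whole space is the only `A`-invariant subspace containing `W`. -/
def Generates {R X : Type*} [CommRing R] [AddCommGroup X] [Module R X] (A : Module.End R X)
    (W : Set X) : Prop :=
  ∀ V ∈ A.invtSubmodule, W ⊆ V → V = ⊤

/-- Controllability: the input directions generate the state space. -/
def IsControllable {R U Y X : Type*} [CommRing R] [AddCommGroup U] [Module R U]
    [AddCommGroup Y] [Module R Y] [AddCommGroup X] [Module R X] (S : StateSpace R U Y X) : Prop :=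
  Generates S.A (Set.range S.B)

lemma IsIso.isControllable {R U Y X X' : Type*} [CommRing R] [AddCommGroup U] [Module R U]
    [AddCommGroup Y] [Module R Y] [AddCommGroup X] [Module R X] [AddCommGroup X'] [Module R X']
    {φ : X ≃ₗ[R] X'} {S : StateSpace R U Y X} {S' : StateSpace R U Y X'} (h : IsIso φ S S')
    (hS : S.IsControllable) : S'.IsControllable := by
  intro V hV hB
  have hcomap : V.comap φ.toLinearMap = ⊤ := by
    refine hS _ (fun z hz => ?_) ?_
    · have hz' : φ (S.A z) ∈ V := (h.map_A z).symm ▸ hV hz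
      exact hz'
    · rintro _ ⟨a, rfl⟩
      have ha : φ (S.B a) ∈ V := (h.map_B a).symm ▸ hB ⟨a, rfl⟩
      exact ha
  refine V.eq_top_iff'.2 fun z => ?_
  obtain ⟨z, rfl⟩ := φ.surjective z
  exact Submodule.mem_comap.1 (hcomap.symm ▸ Submodule.mem_top)

section Reachability

variable {𝕜 U Y X : Type*} [Field 𝕜] [AddCommGroup U] [Module 𝕜 U] [AddCommGroup Y] [Module 𝕜 Y]
  [AddCommGroup X] [Module 𝕜 X] (S : StateSpace 𝕜 U Y X)

/-- The states reachable from rest in `k` steps: the column space of the controllability matrix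
with `k` blocks. -/
def reachable (k : ℕ) : Submodule 𝕜 X :=
  ⨆ i < k, LinearMap.range ((S.A ^ i) ∘ₗ S.B)

variable {S}

lemma reachable_le_iff {k : ℕ} {V : Submodule 𝕜 X} :
    S.reachable k ≤ V ↔ ∀ i < k, ∀ a, (S.A ^ i) (S.B a) ∈ V := by
  simp only [reachable, iSup_le_iff, LinearMap.range_le_iff_comap, Submodule.eq_top_iff',
    Submodule.mem_comap, LinearMap.comp_apply]

variable [Module.Finite 𝕜 X]

lemma pow_mem_span_pow_lt_finrank (A : Module.End 𝕜 X) (i : ℕ) :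
    A ^ i ∈ Submodule.span 𝕜 ((A ^ ·) '' Set.Iio (Module.finrank 𝕜 X)) := by
  classical
  have hmem : Polynomial.X ^ i %ₘ A.charpoly ∈ Polynomial.degreeLT 𝕜 (Module.finrank 𝕜 X) := by
    rw [Polynomial.mem_degreeLT, ← A.charpoly_natDegree,
      ← Polynomial.degree_eq_natDegree A.charpoly_monic.ne_zero]
    exact Polynomial.degree_modByMonic_lt _ A.charpoly_monic
  have hmap := Submodule.mem_map_of_mem (f := (Polynomial.aeval A).toLinearMap) hmem
  rw [Polynomial.degreeLT_eq_span_X_pow, Submodule.map_span, AlgHom.toLinearMap_apply,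
    ← A.pow_eq_aeval_mod_charpoly] at hmap
  simpa only [Finset.coe_image, Finset.coe_range, Set.image_image, AlgHom.toLinearMap_apply,
    map_pow, Polynomial.aeval_X] using hmap

lemma unobservable_finrank_le (k : ℕ) :
    S.unobservable (Module.finrank 𝕜 X) ≤ S.unobservable k := by
  refine fun z hz => mem_unobservable.2 fun i _ => ?_
  have hspan : Submodule.span 𝕜 ((S.A ^ ·) '' Set.Iio (Module.finrank 𝕜 X)) ≤
      LinearMap.ker (S.C ∘ₗ LinearMap.applyₗ (R := 𝕜) z) :=
    Submodule.span_le.2 (Set.image_subset_iff.2 fun j hj => mem_unobservable.1 hz j hj)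
  exact hspan (pow_mem_span_pow_lt_finrank S.A i)

lemma reachable_le_reachable_finrank (k : ℕ) :
    S.reachable k ≤ S.reachable (Module.finrank 𝕜 X) := by
  refine reachable_le_iff.2 fun i _ a => ?_
  have hspan : Submodule.span 𝕜 ((S.A ^ ·) '' Set.Iio (Module.finrank 𝕜 X)) ≤
      (S.reachable (Module.finrank 𝕜 X)).comap (LinearMap.applyₗ (R := 𝕜) (S.B a)) :=
    Submodule.span_le.2 (Set.image_subset_iff.2 fun j hj => reachable_le_iff.1 le_rfl j hj a)
  exact hspan (pow_mem_span_pow_lt_finrank S.A i)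

lemma isControllable_iff_reachable_eq_top :
    S.IsControllable ↔ S.reachable (Module.finrank 𝕜 X) = ⊤ := by
  have hmem : ∀ i a, (S.A ^ i) (S.B a) ∈ S.reachable (Module.finrank 𝕜 X) := fun i a =>
    reachable_le_reachable_finrank (i + 1) (reachable_le_iff.1 le_rfl i i.lt_succ_self a)
  refine ⟨fun h => h _ ?_ ?_, fun h V hV hB => top_le_iff.1 (h ▸ reachable_le_iff.2 ?_)⟩
  · refine reachable_le_iff.2 fun i _ a => ?_
    rw [Submodule.mem_comap, ← Module.End.mul_apply, ← pow_succ']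
    exact hmem (i + 1) a
  · rintro _ ⟨a, rfl⟩
    exact hmem 0 a
  · exact fun i _ a => Module.End.pow_apply_mem_of_forall_mem i hV _ (hB ⟨a, rfl⟩)

end Reachability

variable {𝕜 X : Type*} [Field 𝕜] [AddCommGroup X] [Module 𝕜 X] {A : Module.End 𝕜 X} {W : Set X}
  {L : Type*} [Field L] [Algebra 𝕜 L]

lemma Generates.eq_zero_of_eigenvector (h : Generates A W) {w : X →ₗ[𝕜] L} {μ : L}
    (hw : ∀ z, w (A z) = μ * w z) (hW : ∀ z ∈ W, w z = 0) : w = 0 := by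
  refine LinearMap.ker_eq_top.1 (h _ (fun z hz => ?_) hW)
  rw [Submodule.mem_comap, LinearMap.mem_ker, hw, LinearMap.mem_ker.1 hz, mul_zero]

lemma eigenvector_pow {w : X →ₗ[𝕜] L} {μ : L} (hw : ∀ z, w (A z) = μ * w z) (i : ℕ) (z : X) :
    w ((A ^ i) z) = μ ^ i * w z := by
  induction i with
  | zero => rw [pow_zero, pow_zero, Module.End.one_apply, one_mul]
  | succ i ih => rw [pow_succ', Module.End.mul_apply, hw, ih, pow_succ', mul_assoc]

variable (L) in
/-- Precomposition with `A` acts on the `L`-valued functionals vanishing on a proper invariant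
subspace, where it has an eigenvector. -/
lemma exists_eigenvector_of_not_generates [IsAlgClosed L] [Module.Finite 𝕜 X]
    (h : ¬ Generates A W) :
    ∃ (μ : L) (w : X →ₗ[𝕜] L), w ≠ 0 ∧ (∀ z, w (A z) = μ * w z) ∧ ∀ z ∈ W, w z = 0 := by
  obtain ⟨V, hVA, hWV, hV⟩ : ∃ V ∈ A.invtSubmodule, W ⊆ V ∧ V ≠ ⊤ := by
    simpa only [Generates, not_forall, exists_prop] using h
  have : Nontrivial ((X ⧸ V) →ₗ[𝕜] L) := by
    obtain ⟨f, hf, hfV⟩ := Submodule.exists_le_ker_of_lt_top _ (lt_top_iff_ne_top.2 hV)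
    refine ⟨Algebra.linearMap 𝕜 L ∘ₗ V.liftQ f hfV, 0, fun h0 => hf (LinearMap.ext fun z => ?_)⟩
    exact (algebraMap 𝕜 L).injective
      ((LinearMap.congr_fun h0 (V.mkQ z)).trans (map_zero (algebraMap 𝕜 L)).symm)
  obtain ⟨μ, hμ⟩ := Module.End.exists_eigenvalue
    (LinearMap.lcomp L L (V.mapQ V A hVA) : Module.End L ((X ⧸ V) →ₗ[𝕜] L))
  obtain ⟨w, hw, hw0⟩ := hμ.exists_hasEigenvector
  refine ⟨μ, w ∘ₗ V.mkQ, fun h0 => hw0 ?_, fun z => ?_, fun z hz => ?_⟩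
  · exact LinearMap.ext fun q => by
      obtain ⟨z, rfl⟩ := V.mkQ_surjective q
      exact LinearMap.congr_fun h0 z
  · exact LinearMap.congr_fun (Module.End.mem_eigenspace_iff.1 hw) (V.mkQ z)
  · rw [LinearMap.comp_apply, Submodule.mkQ_apply, (Submodule.Quotient.mk_eq_zero V).2 (hWV hz),
      map_zero]

end Controllability

/-! ### Exceptional eigenvalues of a relation -/

section Exceptional

open scoped Polynomial

variable {𝕜 U Y X L : Type*} [Field 𝕜] [AddCommGroup U] [Module 𝕜 U] [AddCommGroup Y]
  [Module 𝕜 Y] [AddCommGroup X] [Module 𝕜 X] [Field L] [Algebra 𝕜 L] {K : ℕ}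

/-- `w` is an exceptional functional with eigenvalue `μ` for the relation
`ξ x(s) + ∑ j, η j u(s + j)`: the conditions, free of the gain `ε`, that a left eigenvector
obstructing controllability satisfies after `ε` times the relation is fed back along a direction
on which `w` has the value `ε⁻¹`. -/
structure IsExceptional (S : StateSpace 𝕜 U Y X) (ξ : X →ₗ[𝕜] 𝕜)
    (η : Fin (K + 1) → U →ₗ[𝕜] 𝕜) (μ : L) (w : X →ₗ[𝕜] L) : Prop where
  map_A : ∀ z, w (S.A z) + algebraMap 𝕜 L (ξ z) = μ * w z
  map_B : ∀ a, w (S.B a) + ∑ j, algebraMap 𝕜 L (η j a) * μ ^ (j : ℕ) = 0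

variable {S : StateSpace 𝕜 U Y X} {ξ : X →ₗ[𝕜] 𝕜} {η : Fin (K + 1) → U →ₗ[𝕜] 𝕜}

lemma IsControllable.exceptional_unique (hS : S.IsControllable) {μ : L} {w w' : X →ₗ[𝕜] L}
    (h : S.IsExceptional ξ η μ w) (h' : S.IsExceptional ξ η μ w') : w = w' := by
  refine sub_eq_zero.1 (Generates.eq_zero_of_eigenvector (μ := μ) hS (fun z => ?_) ?_)
  · rw [LinearMap.sub_apply, LinearMap.sub_apply, mul_sub, ← h.map_A, ← h'.map_A,
      add_sub_add_right_eq_sub]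
  · rintro _ ⟨a, rfl⟩
    rw [LinearMap.sub_apply, eq_neg_of_add_eq_zero_left (h.map_B a),
      eq_neg_of_add_eq_zero_left (h'.map_B a), sub_self]

/-- The degree of `P (A ^ i z)` would grow with `i`, while `P` has finite rank. -/
lemma eq_zero_of_intertwines_X [IsNoetherian 𝕜 X] {A : Module.End 𝕜 X} {P : X →ₗ[𝕜] L[X]}
    {c : X → L} (h : ∀ z, P (A z) = Polynomial.X * P z - Polynomial.C (c z)) : P = 0 := by
  obtain ⟨d, hd⟩ := monotone_stabilizes_iff_noetherian.2 ‹IsNoetherian 𝕜 X›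
    (⟨fun d => ((Polynomial.degreeLT L d).restrictScalars 𝕜).comap P, fun _ _ hij =>
      Submodule.comap_mono (Polynomial.degreeLT_mono hij)⟩ : ℕ →o Submodule 𝕜 X)
  have degree_lt : ∀ z, (P z).degree < d := fun z => by
    have hz : z ∈ ((Polynomial.degreeLT L (d + ((P z).natDegree + 1))).restrictScalars 𝕜).comap P :=
      Polynomial.mem_degreeLT.2 (Polynomial.degree_le_natDegree.trans_lt (by exact_mod_cast by lia))
    exact Polynomial.mem_degreeLT.1
      ((hd (d + ((P z).natDegree + 1)) (by lia)).symm.le hz : P z ∈ Polynomial.degreeLT L d)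
  by_contra hP
  obtain ⟨z, hz⟩ : ∃ z, P z ≠ 0 := by
    by_contra! h0
    exact hP (LinearMap.ext h0)
  have growth : ∀ i : ℕ, P ((A ^ i) z) ≠ 0 ∧
      (P ((A ^ i) z)).natDegree = (P z).natDegree + i := by
    intro i
    induction i with
    | zero => exact ⟨hz, rfl⟩
    | succ i ih =>
      have hdeg : (P ((A ^ (i + 1)) z)).natDegree = (P z).natDegree + (i + 1) := by
        rw [pow_succ', Module.End.mul_apply, h, Polynomial.natDegree_sub_C,
          Polynomial.natDegree_X_mul ih.1, ih.2, add_assoc]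
      exact ⟨Polynomial.ne_zero_of_natDegree_gt (n := 0) (by lia), hdeg⟩
  have := (Polynomial.natDegree_lt_iff_degree_lt (growth d).1).2 (degree_lt _)
  have := (growth d).2
  lia

/-- `P z` interpolates the values at `z` of the exceptional functionals by a polynomial in the
eigenvalue. -/
lemma IsControllable.exists_interpolation (hS : S.IsControllable)
    (hinf : {μ : L | ∃ w, S.IsExceptional ξ η μ w}.Infinite) :
    ∃ P : X →ₗ[𝕜] L[X],
      (∀ z, P (S.A z) = Polynomial.X * P z - Polynomial.C (algebraMap 𝕜 L (ξ z))) ∧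
      ∀ a, P (S.B a) = -∑ j, Polynomial.C (algebraMap 𝕜 L (η j a)) * Polynomial.X ^ (j : ℕ) := by
  choose w hw using fun μ : {μ : L | ∃ w, S.IsExceptional ξ η μ w} => μ.2
  let ev : L[X] →ₗ[𝕜] {μ : L | ∃ w, S.IsExceptional ξ η μ w} → L :=
    LinearMap.pi fun μ => (Polynomial.leval (μ : L)).restrictScalars 𝕜
  have ev_apply : ∀ p μ, ev p μ = p.eval (μ : L) := fun _ _ => rfl
  have ev_injective : Function.Injective ev := fun p q hpq =>
    Polynomial.eq_of_infinite_eval_eq p q (hinf.mono fun μ hμ => congrFun hpq ⟨μ, hμ⟩)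
  have ev_A : ∀ z p, ev p = LinearMap.pi w z →
      ev (Polynomial.X * p - Polynomial.C (algebraMap 𝕜 L (ξ z))) = LinearMap.pi w (S.A z) := by
    intro z p hp
    ext μ
    rw [ev_apply, Polynomial.eval_sub, Polynomial.eval_mul, Polynomial.eval_X, Polynomial.eval_C,
      ← ev_apply, hp, LinearMap.pi_apply, LinearMap.pi_apply, ← (hw μ).map_A, add_sub_cancel_right]
  have ev_B : ∀ a,
      ev (-∑ j, Polynomial.C (algebraMap 𝕜 L (η j a)) * Polynomial.X ^ (j : ℕ)) =
      LinearMap.pi w (S.B a) := by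
    intro a
    ext μ
    rw [ev_apply, LinearMap.pi_apply, eq_neg_of_add_eq_zero_left ((hw μ).map_B a),
      Polynomial.eval_neg, Polynomial.eval_finsetSum]
    simp only [Polynomial.eval_mul, Polynomial.eval_C, Polynomial.eval_pow, Polynomial.eval_X]
  have interpolable : ∀ z, LinearMap.pi w z ∈ LinearMap.range ev := by
    have htop := hS ((LinearMap.range ev).comap (LinearMap.pi w))
      (fun z ⟨p, hp⟩ => ⟨_, ev_A z p hp⟩) (by rintro _ ⟨a, rfl⟩; exact ⟨_, ev_B a⟩)
    exact fun z => Submodule.mem_comap.1 (htop ▸ Submodule.mem_top)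
  let P : X →ₗ[𝕜] L[X] := (LinearEquiv.ofInjective ev ev_injective).symm ∘ₗ
    (LinearMap.pi w).codRestrict (LinearMap.range ev) interpolable
  have ev_P : ∀ z, ev (P z) = LinearMap.pi w z := fun z =>
    congrArg Subtype.val ((LinearEquiv.ofInjective ev ev_injective).apply_symm_apply _)
  exact ⟨P, fun z => ev_injective ((ev_P _).trans (ev_A z _ (ev_P z)).symm),
    fun a => ev_injective ((ev_P _).trans (ev_B a).symm)⟩

lemma IsControllable.finite_setOf_exceptional [IsNoetherian 𝕜 X] (hS : S.IsControllable)
    (hξη : ξ ≠ 0 ∨ η ≠ 0) : {μ : L | ∃ w, S.IsExceptional ξ η μ w}.Finite := by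
  by_contra hinf
  obtain ⟨P, hPA, hPB⟩ := hS.exists_interpolation hinf
  have hP : P = 0 := eq_zero_of_intertwines_X hPA
  obtain hξ | hη := hξη
  · refine hξ (LinearMap.ext fun z => (algebraMap 𝕜 L).injective (Polynomial.C_injective ?_))
    simpa [hP] using hPA z
  · refine hη (funext fun j => LinearMap.ext fun a => (algebraMap 𝕜 L).injective ?_)
    have hcoeff := congrArg (Polynomial.coeff · (j : ℕ)) (hPB a)
    simpa [hP, Polynomial.coeff_C_mul, Polynomial.coeff_X_pow, Fin.val_inj] using hcoeff

end Exceptional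

/-! ### Channels, feedback and feedforward -/

section Channel

variable {R U Y X : Type*} [CommRing R] [AddCommGroup U] [Module R U] [AddCommGroup Y] [Module R Y]
  [AddCommGroup X] [Module R X] (S : StateSpace R U Y X)

/-- The impulse response of an additional scalar input `e`, acting by
`x(s+1) = A x(s) + B u(s) + e(s) b` and `y(s) = C x(s) + D u(s) + e(s) v`. -/
def impulse (b : X) (v : Y) : ℕ → Y
  | 0 => v
  | i + 1 => S.C ((S.A ^ i) b)

/-- An additional scalar input, entering the state along `b` and the output along `v`, that
reaches the output with a delay of exactly `k` steps. -/
structure Channel (k : ℕ) where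
  b : X
  v : Y
  impulse_of_lt : ∀ i < k, S.impulse b v i = 0
  impulse_ne_zero : S.impulse b v k ≠ 0

variable {S} in
lemma nonempty_channel [Nontrivial Y] {k : ℕ}
    (h : ∀ i < k, S.unobservable (i + 1) ≠ S.unobservable i) : Nonempty (S.Channel k) := by
  cases k with
  | zero =>
    obtain ⟨v, hv⟩ := exists_ne (0 : Y)
    exact ⟨0, v, fun i hi => absurd hi i.not_lt_zero, hv⟩
  | succ k =>
    obtain ⟨b, hb, hbk⟩ : ∃ b ∈ S.unobservable k, S.C ((S.A ^ k) b) ≠ 0 := by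
      simpa only [ne_eq, unobservable_succ_eq_iff, not_forall, exists_prop] using h k k.lt_succ_self
    refine ⟨b, 0, fun i hi => ?_, hbk⟩
    cases i with
    | zero => rfl
    | succ i => exact mem_unobservable.1 hb i (by lia)

/-- The state reached from `0` after `j` steps by the scalar inputs `g` acting along `b`. -/
def forced (A : Module.End R X) (b : X) (g : ℕ → R) : ℕ → X
  | 0 => 0
  | j + 1 => A (forced A b g j) + g j • b

lemma forced_succ' (A : Module.End R X) (b : X) (g : ℕ → R) (j : ℕ) :
    forced A b g (j + 1) = g 0 • (A ^ j) b + forced A b (fun i => g (i + 1)) j := by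
  induction j with
  | zero => simp only [forced, map_zero, zero_add, pow_zero, Module.End.one_apply, add_zero]
  | succ j ih =>
    rw [forced, ih, map_add, map_smul, add_assoc, pow_succ', Module.End.mul_apply, forced]

lemma output_forced (b : X) (v : Y) (g : ℕ → R) (j : ℕ) :
    S.C (forced S.A b g j) + g j • v =
      ∑ p ∈ Finset.HasAntidiagonal.antidiagonal j, g p.1 • S.impulse b v p.2 := by
  induction j generalizing g with
  | zero => simp only [forced, map_zero, zero_add, Finset.Nat.antidiagonal_zero,
      Finset.sum_singleton, impulse]
  | succ j ih =>
    rw [forced_succ', map_add, map_smul, add_assoc, ih fun i => g (i + 1),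
      Finset.Nat.sum_antidiagonal_succ, impulse]

variable {S} in
lemma output_forced_of_delay {b : X} {v : Y} {K : ℕ} (hbv : ∀ i < K, S.impulse b v i = 0)
    (g : ℕ → R) {j : ℕ} (hj : j ≤ K) :
    S.C (forced S.A b g j) + g j • v = g 0 • S.impulse b v j := by
  rw [output_forced, Finset.sum_eq_single (0, j)]
  · rintro ⟨i, l⟩ hp hne
    have := Finset.HasAntidiagonal.mem_antidiagonal.1 hp
    rw [hbv l (by grind), smul_zero]
  · simp

variable {S} in
lemma output_forced_eq_zero {b : X} {v : Y} {K : ℕ} (hbv : ∀ i < K, S.impulse b v i = 0)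
    {g : ℕ → R} {s : ℕ} (hg : ∀ i, i + K ≤ s → g i = 0) :
    S.C (forced S.A b g s) + g s • v = 0 := by
  rw [output_forced]
  refine Finset.sum_eq_zero fun p hp => ?_
  have := Finset.HasAntidiagonal.mem_antidiagonal.1 hp
  obtain hlt | hge := lt_or_ge p.2 K
  · rw [hbv _ hlt, smul_zero]
  · rw [hg p.1 (by lia), zero_smul]

/-- Close the loop from the state to an additional scalar input by the feedback gain `ξ`. -/
def feedback (b : X) (v : Y) (ξ : X →ₗ[R] R) : StateSpace R U Y X where
  A := S.A + ξ.smulRight b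
  B := S.B
  C := S.C + ξ.smulRight v
  D := S.D

/-- Replace the anticipating scalar input `∑ j, η j u(s + j)` along `b` and `v` by its effect on
the state and the output at time `s`. -/
def feedforward (b : X) (v : Y) {K : ℕ} (η : Fin (K + 1) → U →ₗ[R] R) : StateSpace R U Y X where
  A := S.A
  B := S.B + ∑ j, (η j).smulRight ((S.A ^ (j : ℕ)) b)
  C := S.C
  D := S.D + ∑ j, (η j).smulRight (S.impulse b v j)

variable {S}

/-- The anticipation `j` of the input is absorbed by the delay of the channel: subtracting the
part of the state still to be produced by future inputs leaves the output unchanged. -/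
lemma exists_isTrajectory_feedforward {K t : ℕ} {b : X} {v : Y}
    (hbv : ∀ i < K, S.impulse b v i = 0) {η : Fin (K + 1) → U →ₗ[R] R} {u : ℕ → U} {y : ℕ → Y}
    {x : ℕ → X} {e : ℕ → R} (hx : ∀ s < t, x (s + 1) = S.A (x s) + S.B (u s) + e s • b ∧
      y s = S.C (x s) + S.D (u s) + e s • v)
    (he : ∀ s, s + K < t → e s = ∑ j, η j (u (s + j))) :
    ∃ x', (S.feedforward b v η).IsTrajectory t u y x' := by
  let r : ℕ → R := fun s => ∑ j, η j (u (s + j)) - e s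
  let ζ : ℕ → Fin (K + 1) → X := fun s j => forced S.A b (fun i => η j (u (s + i))) j
  have ζ_succ : ∀ s j, ζ (s + 1) j =
      S.A (ζ s j) + η j (u (s + j)) • b - η j (u s) • (S.A ^ (j : ℕ)) b := fun s j => by
    have h := forced_succ' S.A b (fun i => η j (u (s + i))) j
    rw [forced] at h
    simp only [ζ, h, add_zero, add_sub_cancel_left, add_right_comm s 1, add_assoc s _ 1]
  have hr : ∀ s, e s = ∑ j, η j (u (s + j)) - r s := fun s => (sub_sub_cancel _ _).symm
  refine ⟨fun s => x s + forced S.A b r s - ∑ j, ζ s j, fun s hs => ⟨?_, ?_⟩⟩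
  · simp only [feedforward, (hx s hs).1, forced, ζ_succ, hr, map_add, map_sub, map_sum,
      LinearMap.add_apply, LinearMap.sum_apply, LinearMap.smulRight_apply,
      Finset.sum_add_distrib, Finset.sum_sub_distrib, sub_smul, Finset.sum_smul]
    abel
  · have output_ζ : ∑ j, S.C (ζ s j) =
        ∑ j, η j (u s) • S.impulse b v j - ∑ j, η j (u (s + j)) • v := by
      rw [← Finset.sum_sub_distrib]
      exact Finset.sum_congr rfl fun j _ => eq_sub_of_add_eq
        (output_forced_of_delay hbv (fun i => η j (u (s + i))) (Nat.lt_succ_iff.1 j.2))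
    have output_r : S.C (forced S.A b r s) + r s • v = 0 :=
      output_forced_eq_zero hbv fun i hi => sub_eq_zero.2 (he i (by lia)).symm
    simp only [feedforward, (hx s hs).2, hr, map_add, map_sub, map_sum, LinearMap.add_apply,
      LinearMap.sum_apply, LinearMap.smulRight_apply, sub_smul, Finset.sum_smul, output_ζ,
      eq_neg_of_add_eq_zero_left output_r]
    abel

namespace Channel

variable {k : ℕ} (c : S.Channel k)

/-- The loop that returns the relation `ξ x(s) + ∑ j, η j u(s + j)` into the channel; by the
delay of the channel no anticipation of the input is needed. -/
def closedLoop {K : ℕ} (ξ : X →ₗ[R] R) (η : Fin (K + 1) → U →ₗ[R] R) : StateSpace R U Y X :=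
  (S.feedback c.b c.v ξ).feedforward c.b c.v η

lemma output_feedback_pow (ξ : X →ₗ[R] R) {i : ℕ} (hi : i < k) (z : X) :
    (S.feedback c.b c.v ξ).C (((S.feedback c.b c.v ξ).A ^ i) z) = S.C ((S.A ^ i) z) := by
  induction i generalizing z with
  | zero =>
    have hv : c.v = 0 := c.impulse_of_lt 0 hi
    simp only [feedback, pow_zero, Module.End.one_apply, LinearMap.add_apply,
      LinearMap.smulRight_apply, hv, smul_zero, add_zero]
  | succ i ih =>
    have hb : S.C ((S.A ^ i) c.b) = 0 := c.impulse_of_lt (i + 1) hi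
    rw [pow_succ, Module.End.mul_apply, ih (by lia)]
    simp only [feedback, LinearMap.add_apply, LinearMap.smulRight_apply, map_add, map_smul, hb,
      smul_zero, add_zero, pow_succ, Module.End.mul_apply]

lemma impulse_feedback (ξ : X →ₗ[R] R) {i : ℕ} (hi : i ≤ k) :
    (S.feedback c.b c.v ξ).impulse c.b c.v i = S.impulse c.b c.v i := by
  cases i with
  | zero => rfl
  | succ i => exact c.output_feedback_pow ξ hi c.b

lemma unobservable_closedLoop {K : ℕ} (ξ : X →ₗ[R] R) (η : Fin (K + 1) → U →ₗ[R] R) :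
    (c.closedLoop ξ η).unobservable k = S.unobservable k := by
  ext z
  simp only [mem_unobservable]
  exact forall₂_congr fun i hi => by rw [← c.output_feedback_pow ξ hi z]; rfl

lemma exists_isTrajectory_closedLoop {t : ℕ} {u : ℕ → U} {y : ℕ → Y} {x : ℕ → X}
    {ξ : X →ₗ[R] R} {η : Fin (k + 1) → U →ₗ[R] R} (hx : S.IsTrajectory t u y x)
    (hξη : ∀ s, s + k < t → ξ (x s) + ∑ j, η j (u (s + j)) = 0) :
    ∃ x', (c.closedLoop ξ η).IsTrajectory t u y x' := by
  refine exists_isTrajectory_feedforward (x := x) (e := fun s => -ξ (x s))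
    (fun i hi => (c.impulse_feedback ξ hi.le).trans (c.impulse_of_lt i hi)) (fun s hs => ?_)
    fun s hs => (eq_neg_of_add_eq_zero_right (hξη s hs)).symm
  simp only [feedback, hx s hs, LinearMap.add_apply, LinearMap.smulRight_apply, neg_smul]
  constructor <;> abel

end Channel

end Channel

/-! ### Controllable closed loops -/

section ClosedLoop

variable {𝕜 U Y X L : Type*} [Field 𝕜] [AddCommGroup U] [Module 𝕜 U] [AddCommGroup Y]
  [Module 𝕜 Y] [AddCommGroup X] [Module 𝕜 X] [Field L] [Algebra 𝕜 L]
  {S : StateSpace 𝕜 U Y X} {k K : ℕ} {ξ : X →ₗ[𝕜] 𝕜}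

namespace Channel

variable (c : S.Channel k)

/-- The impulse responses shifted by `0, …, k` are triangular with diagonal `impulse k`. -/
lemma eq_zero_of_sum_shift_eq_zero {g : Fin (k + 1) → 𝕜}
    (hg : ∀ l, ∑ j, g j • S.impulse c.b c.v (j + l) = 0) : g = 0 := by
  have hrev : ∀ l, ∀ j : Fin (k + 1), (j : ℕ) + l = k → g j = 0 := by
    intro l
    induction l using Nat.strong_induction_on with
    | _ l ih =>
      intro j hj
      have hsum := hg l
      rw [Finset.sum_eq_single_of_mem j (Finset.mem_univ j), hj] at hsum
      · exact (smul_eq_zero.1 hsum).resolve_right c.impulse_ne_zero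
      · intro i _ hij
        obtain hlt | hgt := Nat.lt_or_gt_of_ne (Fin.val_ne_of_ne hij)
        · rw [c.impulse_of_lt _ (by lia), smul_zero]
        · rw [ih (k - i) (by lia) i (by lia), zero_smul]
  exact funext fun j => hrev (k - j) j (by lia)

lemma eq_zero_of_closedLoop_eq {η : Fin (k + 1) → U →ₗ[𝕜] 𝕜} (h : c.closedLoop ξ η = S) :
    ξ = 0 ∧ η = 0 := by
  have hξb : ∀ z, ξ z • c.b = 0 := fun z =>
    add_eq_left.1 (LinearMap.congr_fun (congrArg StateSpace.A h) z)
  have hξv : ∀ z, ξ z • c.v = 0 := fun z =>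
    add_eq_left.1 (LinearMap.congr_fun (congrArg StateSpace.C h) z)
  have hξ : ξ = 0 := by
    ext z
    by_contra hz
    refine c.impulse_ne_zero ?_
    cases k with
    | zero => exact (smul_eq_zero.1 (hξv z)).resolve_left hz
    | succ k => rw [impulse, (smul_eq_zero.1 (hξb z)).resolve_left hz, map_zero, map_zero]
  subst hξ
  have hfeedback : S.feedback c.b c.v 0 = S := by simp [feedback]
  rw [closedLoop, hfeedback] at h
  refine ⟨rfl, ?_⟩
  suffices ∀ a, (fun j => η j a) = 0 from
    funext fun j => LinearMap.ext fun a => congrFun (this a) j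
  refine fun a => c.eq_zero_of_sum_shift_eq_zero fun l => ?_
  cases l with
  | zero =>
    simpa [feedforward] using add_eq_left.1 (LinearMap.congr_fun (congrArg StateSpace.D h) a)
  | succ l =>
    have hB := add_eq_left.1 (LinearMap.congr_fun (congrArg StateSpace.B h) a)
    simpa [← add_assoc, impulse, pow_add, add_comm _ l] using
      congrArg (fun z => S.C ((S.A ^ l) z)) hB

variable {η : Fin (K + 1) → U →ₗ[𝕜] 𝕜} {w : X →ₗ[𝕜] L} {μ : L}

lemma map_closedLoop_A (w : X →ₗ[𝕜] L) (z : X) :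
    w ((c.closedLoop ξ η).A z) = w (S.A z) + algebraMap 𝕜 L (ξ z) * w c.b := by
  simp only [closedLoop, feedback, feedforward, LinearMap.add_apply, LinearMap.smulRight_apply,
    map_add, map_smul, Algebra.smul_def]

lemma map_closedLoop_B (hw : ∀ z, w ((c.closedLoop ξ η).A z) = μ * w z) (a : U) :
    w ((c.closedLoop ξ η).B a) =
      w (S.B a) + (∑ j, algebraMap 𝕜 L (η j a) * μ ^ (j : ℕ)) * w c.b := by
  have hpow : ∀ i : ℕ, w (((S.feedback c.b c.v ξ).A ^ i) c.b) = μ ^ i * w c.b := fun i =>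
    eigenvector_pow hw i c.b
  simp only [closedLoop, feedforward, LinearMap.add_apply, LinearMap.sum_apply,
    LinearMap.smulRight_apply, map_add, map_sum, map_smul, hpow, Algebra.smul_def, Finset.sum_mul,
    mul_assoc]
  rfl

/-- Rescaled to the value `ε⁻¹` on the channel, a left eigenvector that obstructs the
controllability of the closed loop with gain `ε` does not depend on `ε`. -/
lemma isExceptional_of_eigenvector_closedLoop {ε : 𝕜} (hε : ε ≠ 0)
    (hwb : w c.b = (algebraMap 𝕜 L ε)⁻¹)
    (hwA : ∀ z, w ((c.closedLoop (ε • ξ) (ε • η)).A z) = μ * w z)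
    (hwB : ∀ a, w ((c.closedLoop (ε • ξ) (ε • η)).B a) = 0) : S.IsExceptional ξ η μ w := by
  have hε' : algebraMap 𝕜 L ε ≠ 0 := (map_ne_zero _).2 hε
  refine ⟨fun z => ?_, fun a => ?_⟩
  · rw [← hwA, map_closedLoop_A, hwb, LinearMap.smul_apply, smul_eq_mul, map_mul, mul_right_comm,
      mul_inv_cancel₀ hε', one_mul]
  · have hsum : ∑ j, algebraMap 𝕜 L ((ε • η) j a) * μ ^ (j : ℕ) =
        algebraMap 𝕜 L ε * ∑ j, algebraMap 𝕜 L (η j a) * μ ^ (j : ℕ) := by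
      simp only [Pi.smul_apply, LinearMap.smul_apply, smul_eq_mul, map_mul, mul_assoc,
        Finset.mul_sum]
    rw [← hwB a, map_closedLoop_B c hwA, hwb, hsum, mul_right_comm, mul_inv_cancel₀ hε', one_mul]

lemma exists_isControllable_closedLoop [Infinite 𝕜] [IsAlgClosed L] [Module.Finite 𝕜 X]
    (hgen : Generates S.A (insert c.b (Set.range S.B)))
    (hexc : {q : L × (X →ₗ[𝕜] L) | S.IsExceptional ξ η q.1 q.2}.Finite) :
    ∃ ε : 𝕜, ε ≠ 0 ∧ (c.closedLoop (ε • ξ) (ε • η)).IsControllable := by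
  obtain ⟨ε, -, hε⟩ := Set.infinite_univ.exists_notMem_finite
    (((hexc.image fun q => (q.2 c.b)⁻¹).preimage (algebraMap 𝕜 L).injective.injOn).insert 0)
  rw [Set.mem_insert_iff, not_or] at hε
  refine ⟨ε, hε.1, ?_⟩
  by_contra hctrl
  obtain ⟨μ, w, hw0, hwA, hwB⟩ := exists_eigenvector_of_not_generates L hctrl
  rw [Set.forall_mem_range] at hwB
  by_cases hwb : w c.b = 0
  · refine hw0 (hgen.eq_zero_of_eigenvector (μ := μ) (fun z => ?_) ?_)
    · rw [← hwA, map_closedLoop_A, hwb, mul_zero, add_zero]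
    · rintro _ (rfl | ⟨a, rfl⟩)
      · exact hwb
      · rw [← hwB a, map_closedLoop_B c hwA, hwb, mul_zero, add_zero]
  · let κ : L := (algebraMap 𝕜 L ε * w c.b)⁻¹
    have hκb : (κ • w) c.b = (algebraMap 𝕜 L ε)⁻¹ := by
      rw [LinearMap.smul_apply, smul_eq_mul, show κ = _ from mul_inv _ _,
        inv_mul_cancel_right₀ hwb]
    refine hε.2 ⟨(μ, κ • w), c.isExceptional_of_eigenvector_closedLoop hε.1 hκb ?_ ?_, ?_⟩
    · exact fun z => by
        rw [LinearMap.smul_apply, hwA, LinearMap.smul_apply, smul_eq_mul, smul_eq_mul,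
          mul_left_comm]
    · exact fun a => by rw [LinearMap.smul_apply, hwB, smul_zero]
    · exact (congrArg _ hκb).trans (inv_inv _)

end Channel

end ClosedLoop

/-! ### Delaying a channel -/

section Cascade

variable {R U Y X : Type*} [CommRing R] [AddCommGroup U] [Module R U] [AddCommGroup Y] [Module R Y]
  [AddCommGroup X] [Module R X] {S : StateSpace R U Y X}

variable (S) in
/-- Drive a scalar input along `b` and `v` by the state `e` of the filter `e(s+1) = ν e(s)`. -/
def cascade (b : X) (v : Y) (ν : R) : StateSpace R U Y (X × R) where
  A := (S.A ∘ₗ LinearMap.fst R X R + (LinearMap.snd R X R).smulRight b).prod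
    (ν • LinearMap.snd R X R)
  B := LinearMap.inl R X R ∘ₗ S.B
  C := S.C ∘ₗ LinearMap.fst R X R + (LinearMap.snd R X R).smulRight v
  D := S.D

lemma cascade_A_apply (b : X) (v : Y) (ν : R) (q : X × R) :
    (S.cascade b v ν).A q = (S.A q.1 + q.2 • b, ν * q.2) := rfl

lemma IsTrajectory.cascade {t : ℕ} {u : ℕ → U} {y : ℕ → Y} {x : ℕ → X}
    (hx : S.IsTrajectory t u y x) (b : X) (v : Y) (ν : R) :
    (S.cascade b v ν).IsTrajectory t u y fun s => (x s, 0) := fun s hs => by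
  simp [StateSpace.cascade, hx s hs]

lemma generates_cascade {b : X} (v : Y) (ν : R)
    (h : Generates S.A (insert b (Set.range S.B))) :
    Generates (S.cascade b v ν).A (insert (0, 1) (Set.range (S.cascade b v ν).B)) := by
  intro V hV hW
  have hfilter : ((0, 1) : X × R) ∈ V := hW (Set.mem_insert _ _)
  have hstate : V.comap (LinearMap.inl R X R) = ⊤ := by
    refine h _ (fun z hz => ?_) (Set.insert_subset ?_ ?_)
    · have := hV hz
      rw [Submodule.mem_comap, cascade_A_apply] at this
      simpa using this
    · have := V.sub_mem (hV hfilter) (V.smul_mem ν hfilter)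
      simpa [cascade_A_apply] using this
    · rintro _ ⟨a, rfl⟩
      exact hW (Set.mem_insert_of_mem _ ⟨a, rfl⟩)
  refine V.eq_top_iff'.2 fun q => ?_
  have hq : (q.1, 0) ∈ V := Submodule.mem_comap.1 (hstate.symm ▸ Submodule.mem_top)
  simpa using V.add_mem hq (V.smul_mem q.2 hfilter)

namespace Channel

variable {k : ℕ} (c : S.Channel k) (ν : R)

lemma output_cascade_pow {i : ℕ} (hi : i ≤ k) (q : X × R) :
    (S.cascade c.b c.v ν).C (((S.cascade c.b c.v ν).A ^ i) q) =
      S.C ((S.A ^ i) q.1) + q.2 • S.impulse c.b c.v i := by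
  induction i generalizing q with
  | zero => rfl
  | succ i ih =>
    rw [pow_succ, Module.End.mul_apply, ih (by lia), c.impulse_of_lt i hi, cascade_A_apply,
      map_add, map_smul, map_add, map_smul, smul_zero, add_zero, pow_succ, Module.End.mul_apply,
      impulse]

/-- The channel through a filter `e(s+1) = ν e(s) + f(s)` placed in front of the channel `c`: its
input `f` reaches the output one step later than the filter state `e`. -/
def delay : (S.cascade c.b c.v ν).Channel (k + 1) :=
  have impulse_succ : ∀ i ≤ k, (S.cascade c.b c.v ν).impulse (0, 1) 0 (i + 1) =
      S.impulse c.b c.v i := fun i hi => by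
    rw [impulse, c.output_cascade_pow ν hi, map_zero, map_zero, zero_add, one_smul]
  { b := (0, 1)
    v := 0
    impulse_of_lt := fun i hi => by
      cases i with
      | zero => rfl
      | succ i => rw [impulse_succ i (by lia), c.impulse_of_lt i (by lia)]
    impulse_ne_zero := impulse_succ k le_rfl ▸ c.impulse_ne_zero }

lemma unobservable_cascade [IsDomain R] [Module.IsTorsionFree R Y]
    (h : S.unobservable k = ⊥) : (S.cascade c.b c.v ν).unobservable (k + 1) = ⊥ := by
  refine (Submodule.eq_bot_iff _).2 fun q hq => ?_
  have houtput : ∀ i ≤ k, S.C ((S.A ^ i) q.1) + q.2 • S.impulse c.b c.v i = 0 := fun i hi => by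
    rw [← c.output_cascade_pow ν hi, mem_unobservable.1 hq i (by lia)]
  have hstate : q.1 = 0 := by
    refine (Submodule.eq_bot_iff _).1 h _ (mem_unobservable.2 fun i hi => ?_)
    simpa [c.impulse_of_lt i hi] using houtput i hi.le
  refine Prod.ext hstate ?_
  have hk := houtput k le_rfl
  rw [hstate, map_zero, map_zero, zero_add] at hk
  exact (smul_eq_zero.1 hk).resolve_right c.impulse_ne_zero

end Channel

end Cascade

/-! ### Systems in which a relation can be fed back -/

section LoopClosable

variable {𝕜 U Y X L : Type*} [Field 𝕜] [AddCommGroup U] [Module 𝕜 U] [AddCommGroup Y]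
  [Module 𝕜 Y] [AddCommGroup X] [Module 𝕜 X] [Field L] [Algebra 𝕜 L] {S : StateSpace 𝕜 U Y X}
  {k K t : ℕ} {u : ℕ → U} {y : ℕ → Y} {ξ : X →ₗ[𝕜] 𝕜} {η : Fin (K + 1) → U →ₗ[𝕜] 𝕜}

lemma finite_exceptional_cascade [Infinite 𝕜] {b : X}
    (hexc : {q : L × (X →ₗ[𝕜] L) | S.IsExceptional ξ η q.1 q.2}.Finite) (v : Y) :
    ∃ ν : 𝕜, {q : L × (X × 𝕜 →ₗ[𝕜] L) |
      (S.cascade b v ν).IsExceptional (ξ ∘ₗ LinearMap.fst 𝕜 X 𝕜) η q.1 q.2}.Finite := by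
  obtain ⟨ν, -, hν⟩ := Set.infinite_univ.exists_notMem_finite
    ((hexc.image Prod.fst).preimage (algebraMap 𝕜 L).injective.injOn)
  let restrict : L × (X × 𝕜 →ₗ[𝕜] L) → L × (X →ₗ[𝕜] L) :=
    fun q => (q.1, q.2 ∘ₗ LinearMap.inl 𝕜 X 𝕜)
  have hrestrict : ∀ q : L × (X × 𝕜 →ₗ[𝕜] L),
      (S.cascade b v ν).IsExceptional (ξ ∘ₗ LinearMap.fst 𝕜 X 𝕜) η q.1 q.2 →
        S.IsExceptional ξ η (restrict q).1 (restrict q).2 := fun q hq =>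
    ⟨fun z => by simpa [cascade_A_apply, restrict] using hq.map_A (z, 0), hq.map_B⟩
  have hfilter : ∀ q : L × (X × 𝕜 →ₗ[𝕜] L),
      (S.cascade b v ν).IsExceptional (ξ ∘ₗ LinearMap.fst 𝕜 X 𝕜) η q.1 q.2 →
        q.2 (0, 1) = q.2 (b, 0) / (q.1 - algebraMap 𝕜 L ν) := by
    intro q hq
    have hne : q.1 - algebraMap 𝕜 L ν ≠ 0 := fun h0 =>
      hν ⟨restrict q, hrestrict q hq, sub_eq_zero.1 h0⟩
    have hsplit : ((b, ν) : X × 𝕜) = (b, 0) + ν • (0, 1) := by simp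
    have h := hq.map_A (0, 1)
    simp only [cascade_A_apply, map_zero, zero_add, one_smul, mul_one, LinearMap.comp_apply,
      LinearMap.fst_apply, add_zero] at h
    rw [hsplit, map_add, map_smul, Algebra.smul_def] at h
    rw [eq_div_iff hne]
    linear_combination -h
  refine ⟨ν, Set.Finite.of_injOn (f := restrict)
    (t := {q | S.IsExceptional ξ η q.1 q.2}) hrestrict (fun q hq q' hq' h => ?_) hexc⟩
  obtain ⟨hμ, hw⟩ := Prod.ext_iff.1 h
  refine Prod.ext hμ (LinearMap.prod_ext hw (LinearMap.ext_ring ?_))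
  have hb : q.2 (b, 0) = q'.2 (b, 0) := LinearMap.congr_fun hw b
  simp only [LinearMap.comp_apply, LinearMap.inr_apply]
  rw [hfilter q hq, hfilter q' hq', hb, show q.1 = q'.1 from hμ]

/-- The hypotheses on a system with a channel under which feeding the relation
`ξ x(s) + ∑ j, η j u(s + j)` back into the channel keeps it observable and, for almost all gains,
makes it controllable. -/
structure Channel.LoopClosable (L : Type*) [Field L] [Algebra 𝕜 L] (c : S.Channel k) (t : ℕ)
    (u : ℕ → U) (y : ℕ → Y) (ξ : X →ₗ[𝕜] 𝕜) (η : Fin (K + 1) → U →ₗ[𝕜] 𝕜) : Prop where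
  unobservable_eq_bot : S.unobservable k = ⊥
  generates : Generates S.A (insert c.b (Set.range S.B))
  finite_exceptional : {q : L × (X →ₗ[𝕜] L) | S.IsExceptional ξ η q.1 q.2}.Finite
  exists_isTrajectory : ∃ x, S.IsTrajectory t u y x ∧
    ∀ s, s + K < t → ξ (x s) + ∑ j, η j (u (s + j)) = 0

lemma IsControllable.loopClosable [IsNoetherian 𝕜 X] (hS : S.IsControllable) (c : S.Channel k)
    (hk : S.unobservable k = ⊥) (hξη : ξ ≠ 0 ∨ η ≠ 0) {x : ℕ → X} (hx : S.IsTrajectory t u y x)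
    (hxu : ∀ s, s + K < t → ξ (x s) + ∑ j, η j (u (s + j)) = 0) :
    c.LoopClosable L t u y ξ η where
  unobservable_eq_bot := hk
  generates := fun V hV hW => hS V hV ((Set.subset_insert _ _).trans hW)
  finite_exceptional := Set.Finite.of_injOn (f := Prod.fst)
    (t := {μ : L | ∃ w, S.IsExceptional ξ η μ w}) (fun q hq => ⟨q.2, hq⟩)
    (fun _ hq _ hq' h => Prod.ext h (hS.exceptional_unique hq (h ▸ hq')))
    (hS.finite_setOf_exceptional hξη)
  exists_isTrajectory := ⟨x, hx, hxu⟩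

namespace Channel.LoopClosable

variable [Infinite 𝕜]

lemma exists_delay {c : S.Channel k} (h : c.LoopClosable L t u y ξ η) :
    ∃ ν : 𝕜, (c.delay ν).LoopClosable L t u y (ξ ∘ₗ LinearMap.fst 𝕜 X 𝕜) η := by
  obtain ⟨ν, hν⟩ := finite_exceptional_cascade (b := c.b) h.finite_exceptional c.v
  obtain ⟨x, hx, hxu⟩ := h.exists_isTrajectory
  exact ⟨ν, c.unobservable_cascade ν h.unobservable_eq_bot, generates_cascade c.v ν h.generates,
    hν, _, hx.cascade c.b c.v ν, hxu⟩

lemma exists_closedLoop [IsAlgClosed L] [Module.Finite 𝕜 X] {c : S.Channel K}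
    (h : c.LoopClosable L t u y ξ η) :
    ∃ ε : 𝕜, ε ≠ 0 ∧ (c.closedLoop (ε • ξ) (ε • η)).IsControllable ∧
      ∃ x', (c.closedLoop (ε • ξ) (ε • η)).IsTrajectory t u y x' := by
  obtain ⟨x, hx, hxu⟩ := h.exists_isTrajectory
  obtain ⟨ε, hε, hctrl⟩ := c.exists_isControllable_closedLoop h.generates h.finite_exceptional
  refine ⟨ε, hε, hctrl, c.exists_isTrajectory_closedLoop hx fun s hs => ?_⟩
  calc (ε • ξ) (x s) + ∑ j, (ε • η) j (u (s + j))
      = ε • (ξ (x s) + ∑ j, η j (u (s + j))) := by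
        rw [smul_add, Finset.smul_sum]
        rfl
    _ = 0 := by rw [hxu s hs, smul_zero]

end Channel.LoopClosable

end LoopClosable

section IterateDelay

universe v

-- `𝕜` and `X` share a universe because `X × 𝕜` becomes the new state space.
variable {𝕜 X : Type v} {U Y L : Type*} [Field 𝕜] [Infinite 𝕜] [AddCommGroup U] [Module 𝕜 U]
  [AddCommGroup Y] [Module 𝕜 Y] [AddCommGroup X] [Module 𝕜 X] [Field L] [Algebra 𝕜 L]
  {S : StateSpace 𝕜 U Y X} {k K t : ℕ} {u : ℕ → U} {y : ℕ → Y} {ξ : X →ₗ[𝕜] 𝕜}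
  {η : Fin (K + 1) → U →ₗ[𝕜] 𝕜}

lemma Channel.LoopClosable.exists_iterate_delay [Module.Finite 𝕜 X] {c : S.Channel k}
    (h : c.LoopClosable L t u y ξ η) (d : ℕ) :
    ∃ (X' : Type v) (_ : AddCommGroup X') (_ : Module 𝕜 X') (_ : Module.Finite 𝕜 X')
      (S' : StateSpace 𝕜 U Y X') (c' : S'.Channel (k + d)) (ξ' : X' →ₗ[𝕜] 𝕜),
      Module.finrank 𝕜 X' = Module.finrank 𝕜 X + d ∧ c'.LoopClosable L t u y ξ' η := by
  induction d with
  | zero => exact ⟨X, _, _, ‹_›, S, c, ξ, rfl, h⟩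
  | succ d ih =>
    obtain ⟨X', _, _, _, S', c', ξ', hrank, h'⟩ := ih
    obtain ⟨ν, hν⟩ := h'.exists_delay
    refine ⟨X' × 𝕜, _, _, inferInstance, _, c'.delay ν, _, ?_, hν⟩
    rw [Module.finrank_prod, Module.finrank_self, hrank, add_assoc]

end IterateDelay

end StateSpace

/-! ### Systems given by matrices -/

section LinSys

variable {m p : ℕ}

namespace LinSys

variable (sys : LinSys m p)

/-- The coordinate-free form of a system given by matrices. -/
def toStateSpace : StateSpace ℝ (Fin m → ℝ) (Fin p → ℝ) (Fin sys.n → ℝ) where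
  A := sys.A.toLin'
  B := sys.B.toLin'
  C := sys.C.toLin'
  D := sys.D.toLin'

variable {sys}

lemma explains_iff {t : ℕ} {u : ℕ → Fin m → ℝ} {y : ℕ → Fin p → ℝ} :
    Explains sys t u y ↔ ∃ x, sys.toStateSpace.IsTrajectory t u y x := Iff.rfl

lemma ker_obsMat (k : ℕ) :
    LinearMap.ker (obsMat sys k).toLin' = sys.toStateSpace.unobservable k := by
  ext z
  have hrow : ∀ r : Fin k × Fin p, (obsMat sys k *ᵥ z) r =
      sys.toStateSpace.C ((sys.toStateSpace.A ^ (r.1 : ℕ)) z) r.2 := fun r => by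
    rw [toStateSpace, ← toLin'_pow, toLin'_apply, toLin'_apply, mulVec_mulVec]
    rfl
  simp only [LinearMap.mem_ker, toLin'_apply, StateSpace.mem_unobservable, funext_iff, hrow,
    Prod.forall, Fin.forall_iff, Pi.zero_apply]

lemma rank_obsMat_add_finrank (k : ℕ) :
    (obsMat sys k).rank + Module.finrank ℝ (sys.toStateSpace.unobservable k) = sys.n := by
  rw [← ker_obsMat]
  exact (LinearMap.finrank_range_add_finrank_ker (obsMat sys k).toLin').trans
    (Module.finrank_fin_fun ℝ)

lemma rank_obsMat_succ_eq_iff {k : ℕ} :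
    (obsMat sys (k + 1)).rank = (obsMat sys k).rank ↔
      sys.toStateSpace.unobservable (k + 1) = sys.toStateSpace.unobservable k := by
  have hsucc := sys.rank_obsMat_add_finrank (k + 1)
  have hk := sys.rank_obsMat_add_finrank k
  refine ⟨fun h => Submodule.eq_of_le_of_finrank_eq
    (StateSpace.unobservable_antitone k.le_succ) (by lia), fun h => ?_⟩
  rw [h] at hsucc
  lia

lemma observable_iff : Observable sys ↔ sys.toStateSpace.unobservable sys.n = ⊥ := by
  have hn := sys.rank_obsMat_add_finrank sys.n
  rw [Observable, ← Submodule.finrank_eq_zero]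
  lia

lemma range_ctrlMat (k : ℕ) :
    LinearMap.range (ctrlMat sys k).toLin' = sys.toStateSpace.reachable k := by
  have hblock : ∀ i, (sys.toStateSpace.A ^ i) ∘ₗ sys.toStateSpace.B =
      (sys.A ^ i * sys.B).mulVecLin := fun i => by
    rw [toStateSpace, ← toLin'_pow, ← toLin'_mul, toLin'_apply']
  simp only [StateSpace.reachable, hblock, toLin'_apply', range_mulVecLin]
  refine le_antisymm (Submodule.span_le.2 ?_) (iSup₂_le fun i hi => Submodule.span_le.2 ?_)
  · rintro _ ⟨⟨i, j⟩, rfl⟩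
    exact Submodule.mem_iSup_of_mem (i : ℕ)
      (Submodule.mem_iSup_of_mem i.2 (Submodule.subset_span ⟨j, rfl⟩))
  · rintro _ ⟨j, rfl⟩
    exact Submodule.subset_span ⟨(⟨i, hi⟩, j), rfl⟩

lemma controllable_iff : Controllable sys ↔ sys.toStateSpace.IsControllable := by
  rw [StateSpace.isControllable_iff_reachable_eq_top, Module.finrank_fin_fun, ← range_ctrlMat,
    Controllable, Matrix.rank, ← toLin'_apply']
  refine ⟨fun h => Submodule.eq_top_of_finrank_eq (h.trans (Module.finrank_fin_fun ℝ).symm),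
    fun h => ?_⟩
  rw [h, finrank_top, Module.finrank_fin_fun]

variable (sys) in
lemma unobservable_lag_succ :
    sys.toStateSpace.unobservable (lag sys + 1) = sys.toStateSpace.unobservable (lag sys) := by
  obtain ⟨k, hk⟩ := sys.toStateSpace.exists_unobservable_stationary
  have hne : {k | (obsMat sys (k + 1)).rank = (obsMat sys k).rank}.Nonempty :=
    ⟨k, rank_obsMat_succ_eq_iff.2 hk⟩
  exact rank_obsMat_succ_eq_iff.1 (Nat.sInf_mem hne)

lemma lag_le {k : ℕ}
    (h : sys.toStateSpace.unobservable (k + 1) = sys.toStateSpace.unobservable k) :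
    lag sys ≤ k :=
  Nat.sInf_le (rank_obsMat_succ_eq_iff.2 h)

lemma lag_le_of_unobservable_eq_bot {k : ℕ} (h : sys.toStateSpace.unobservable k = ⊥) :
    lag sys ≤ k :=
  lag_le (h.symm ▸ le_bot_iff.1 (h ▸ StateSpace.unobservable_antitone k.le_succ))

lemma unobservable_lag_of_observable (h : Observable sys) :
    sys.toStateSpace.unobservable (lag sys) = ⊥ := by
  rw [← StateSpace.unobservable_eq_of_stationary sys.unobservable_lag_succ
    (le_max_left _ sys.n), ← le_bot_iff, ← observable_iff.1 h]
  exact StateSpace.unobservable_antitone (le_max_right _ _)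

lemma observable_of_unobservable_eq_bot {k : ℕ} (h : sys.toStateSpace.unobservable k = ⊥) :
    Observable sys := by
  have hle := StateSpace.unobservable_finrank_le (S := sys.toStateSpace) k
  rw [Module.finrank_fin_fun, h, le_bot_iff] at hle
  exact observable_iff.2 hle

variable (sys) in
lemma nonempty_channel_lag [NeZero p] : Nonempty (sys.toStateSpace.Channel (lag sys)) :=
  StateSpace.nonempty_channel fun _ hi h => hi.not_ge (lag_le h)

/-- The matrices of a system in the coordinates `φ` of its state space. -/
noncomputable def ofStateSpace {n : ℕ} {X : Type*} [AddCommGroup X] [Module ℝ X]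
    (φ : X ≃ₗ[ℝ] (Fin n → ℝ)) (S : StateSpace ℝ (Fin m → ℝ) (Fin p → ℝ) X) : LinSys m p where
  n := n
  A := LinearMap.toMatrix' (φ ∘ₗ S.A ∘ₗ φ.symm)
  B := LinearMap.toMatrix' (φ ∘ₗ S.B)
  C := LinearMap.toMatrix' (S.C ∘ₗ φ.symm)
  D := LinearMap.toMatrix' S.D

lemma isIso_ofStateSpace {n : ℕ} {X : Type*} [AddCommGroup X] [Module ℝ X]
    (φ : X ≃ₗ[ℝ] (Fin n → ℝ)) (S : StateSpace ℝ (Fin m → ℝ) (Fin p → ℝ) X) :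
    StateSpace.IsIso φ S (ofStateSpace φ S).toStateSpace where
  map_A z := (congrArg (φ ∘ S.A) (φ.symm_apply_apply z).symm).trans
    (LinearMap.congr_fun (toLin'_toMatrix' (φ.toLinearMap ∘ₗ S.A ∘ₗ φ.symm.toLinearMap))
      (φ z)).symm
  map_B a := (LinearMap.congr_fun (toLin'_toMatrix' (φ.toLinearMap ∘ₗ S.B)) a).symm
  map_C z := (LinearMap.congr_fun (toLin'_toMatrix' _) _).trans
    (congrArg S.C (φ.symm_apply_apply z))
  D_eq := (toLin'_toMatrix' S.D).symm

end LinSys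

open LinSys

lemma Isomorphic.exists_isIso {s₁ s₂ : LinSys m p} (h : Isomorphic s₁ s₂) :
    ∃ φ, StateSpace.IsIso φ s₁.toStateSpace s₂.toStateSpace := by
  obtain ⟨hD, P, Q, hPQ, hQP, hA, hB, hC⟩ := h
  refine ⟨toLin'OfInv hQP hPQ, fun z => ?_, fun a => ?_, fun z => ?_, congrArg toLin' hD⟩
  · change P *ᵥ s₁.A *ᵥ z = s₂.A *ᵥ P *ᵥ z
    rw [mulVec_mulVec, hA, mulVec_mulVec]
  · change P *ᵥ s₁.B *ᵥ a = s₂.B *ᵥ a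
    rw [mulVec_mulVec, hB]
  · change s₂.C *ᵥ P *ᵥ z = s₁.C *ᵥ z
    rw [mulVec_mulVec, hC]

section Informative

variable {t L N : ℕ} {u : ℕ → Fin m → ℝ} {y : ℕ → Fin p → ℝ}

lemma exists_minimal_realization {X : Type*} [AddCommGroup X] [Module ℝ X] [Module.Finite ℝ X]
    {S : StateSpace ℝ (Fin m → ℝ) (Fin p → ℝ) X} (hS : S.IsControllable) {k : ℕ}
    (hk : S.unobservable k = ⊥) (hL : k ≤ L) (hN : Module.finrank ℝ X ≤ N) {x : ℕ → X}
    (hx : S.IsTrajectory t u y x) :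
    ∃ sys ∈ ExplSet t u y ∩ Mset m p ∩ SLN m p L N, ∃ φ, StateSpace.IsIso φ S sys.toStateSpace := by
  let φ := (Module.finBasis ℝ X).equivFun
  have hφ := isIso_ofStateSpace φ S
  have hobs := hφ.unobservable_eq_bot hk
  exact ⟨ofStateSpace φ S, ⟨⟨explains_iff.2 ⟨_, hφ.isTrajectory hx⟩,
    controllable_iff.2 (hφ.isControllable hS), observable_of_unobservable_eq_bot hobs⟩,
    (lag_le_of_unobservable_eq_bot hobs).trans hL, hN⟩, φ, hφ⟩

variable {sysT : LinSys m p} {x : ℕ → Fin sysT.n → ℝ} {d : ℕ} {ξ : (Fin sysT.n → ℝ) →ₗ[ℝ] ℝ}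

/-- Closing the loop leaves all `C A^i` with `i < lag sysT` unchanged, so an isomorphism with the
true system would have to be the identity. -/
lemma Informative.false_of_annihilator [NeZero p] (hinf : Informative t u y sysT.n L N)
    (hmin : MinimalSys sysT) (hL : lag sysT ≤ L) (hN : sysT.n ≤ N)
    {η : Fin (lag sysT + 1) → (Fin m → ℝ) →ₗ[ℝ] ℝ} (hξη : ξ ≠ 0 ∨ η ≠ 0)
    (hx : sysT.toStateSpace.IsTrajectory t u y x)
    (hxu : ∀ s, s + lag sysT < t → ξ (x s) + ∑ j, η j (u (s + j)) = 0) : False := by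
  obtain ⟨c⟩ := sysT.nonempty_channel_lag
  have hobs := unobservable_lag_of_observable hmin.2
  obtain ⟨ε, hε, hctrl, x', hx'⟩ :=
    ((controllable_iff.1 hmin.1).loopClosable (L := ℂ) c hobs hξη hx hxu).exists_closedLoop
  obtain ⟨sys, hsys, φ, hφ⟩ := exists_minimal_realization hctrl
    ((c.unobservable_closedLoop _ _).trans hobs) hL ((Module.finrank_fin_fun ℝ).le.trans hN) hx'
  obtain ⟨ψ, hψ⟩ := (hinf.2 sysT
    ⟨⟨explains_iff.2 ⟨x, hx⟩, hmin⟩, hL, hN⟩ sys hsys).exists_isIso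
  obtain ⟨hξ, hη⟩ := c.eq_zero_of_closedLoop_eq
    (hψ.eq_of_output_eq hφ hobs fun i hi => c.output_feedback_pow _ hi)
  exact hξη.elim (· ((smul_eq_zero.1 hξ).resolve_left hε))
    (· ((smul_eq_zero.1 hη).resolve_left hε))

/-- Delaying the channel `d` times before closing the loop adds `d` states. -/
lemma Informative.false_of_annihilator_of_pos [NeZero p] (hinf : Informative t u y sysT.n L N)
    (hmin : MinimalSys sysT) (hd : 0 < d) (hL : lag sysT + d ≤ L) (hN : sysT.n + d ≤ N)
    {η : Fin (lag sysT + d + 1) → (Fin m → ℝ) →ₗ[ℝ] ℝ} (hξη : ξ ≠ 0 ∨ η ≠ 0)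
    (hx : sysT.toStateSpace.IsTrajectory t u y x)
    (hxu : ∀ s, s + (lag sysT + d) < t → ξ (x s) + ∑ j, η j (u (s + j)) = 0) : False := by
  obtain ⟨c⟩ := sysT.nonempty_channel_lag
  have hobs := unobservable_lag_of_observable hmin.2
  obtain ⟨X', _, _, _, S', c', ξ', hrank, hclosable⟩ :=
    ((controllable_iff.1 hmin.1).loopClosable (L := ℂ) c hobs hξη hx hxu).exists_iterate_delay d
  obtain ⟨ε, -, hctrl, x', hx'⟩ := hclosable.exists_closedLoop
  obtain ⟨sys, hsys, φ, -⟩ := exists_minimal_realization hctrl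
    ((c'.unobservable_closedLoop _ _).trans hclosable.unobservable_eq_bot) hL
    ((hrank.trans (congrArg (· + d) (Module.finrank_fin_fun ℝ))).le.trans hN) hx'
  have hn : sys.n = sysT.n := (hinf.1 ▸ hsys).1.1.2
  have hφ := φ.finrank_eq
  rw [hrank, Module.finrank_fin_fun, Module.finrank_fin_fun] at hφ
  lia

lemma Informative.windowsSpan [NeZero p] (hinf : Informative t u y sysT.n L N)
    (hmin : MinimalSys sysT) (hL : lag sysT + d ≤ L) (hN : sysT.n + d ≤ N)
    (hx : sysT.toStateSpace.IsTrajectory t u y x) :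
    StateSpace.WindowsSpan ℝ (lag sysT + d) t u x := by
  by_contra h
  obtain ⟨ξ, η, hξη, hxu⟩ := StateSpace.exists_annihilator_of_not_windowsSpan h
  obtain rfl | hd := d.eq_zero_or_pos
  · exact hinf.false_of_annihilator hmin hL hN hξη hx hxu
  · exact hinf.false_of_annihilator_of_pos hmin hd hL hN hξη hx hxu

end Informative

end LinSys

/-- **Minimum length of informative experiments.** If the data (generated by a
minimal true system with `ℓ_true ≤ L`, `n_true ≤ N`) are informative for
system identification, then `ℓ_min,t = ℓ_true`, `n_min,t = n_true`, and
`t ≥ T = L^a + (L^a + 1)m + n_true` with `L^a = min(L, N - n_true + ℓ_true)`. -/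
theorem informative_min_length {m p : ℕ} (hm : 1 ≤ m) (hp : 1 ≤ p)
    (t L N : ℕ) (u : ℕ → Fin m → ℝ) (y : ℕ → Fin p → ℝ)
    (hu : ∃ s < t, u s ≠ 0)
    (sysT : LinSys m p) (hmin : MinimalSys sysT) (hdata : Explains sysT t u y)
    (hL : lag sysT ≤ L) (hN : sysT.n ≤ N)
    (hinf : Informative t u y sysT.n L N) :
    lMin t u y = lag sysT ∧ nMin t u y = sysT.n ∧
      min L (N - sysT.n + lag sysT) +
        (min L (N - sysT.n + lag sysT) + 1) * m + sysT.n ≤ t := by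
  have : NeZero p := ⟨by lia⟩
  obtain ⟨d, hK⟩ : ∃ d, min L (N - sysT.n + lag sysT) = lag sysT + d :=
    Nat.exists_eq_add_of_le (by lia)
  obtain ⟨x, hx⟩ := LinSys.explains_iff.1 hdata
  have hspan := hinf.windowsSpan hmin (d := d) (by lia) (by lia) hx
  refine ⟨IsLeast.csInf_eq ⟨⟨sysT, hdata, rfl⟩, ?_⟩, IsLeast.csInf_eq ⟨⟨sysT, hdata, rfl⟩, ?_⟩, ?_⟩
  · rintro _ ⟨sys, hsys, rfl⟩
    obtain ⟨x', hx'⟩ := LinSys.explains_iff.1 hsys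
    by_contra! hlt
    exact hlt.not_ge <| LinSys.lag_le <|
      hspan.unobservable_stationary hx hx' (by lia) sys.unobservable_lag_succ
  · rintro _ ⟨sys, hsys, rfl⟩
    obtain ⟨x', hx'⟩ := LinSys.explains_iff.1 hsys
    simpa only [Module.finrank_fin_fun] using hspan.finrank_le_finrank hx hx' (by lia)
      (LinSys.unobservable_lag_of_observable hmin.2)
  · have hT := hspan.finrank_le
    have hpos : 0 < (lag sysT + d + 1) * m := Nat.mul_pos (by lia) hm
    rw [Module.finrank_fin_fun, Module.finrank_fin_fun] at hT
    rw [hK]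
    lia
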